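/- arXiv:2503.11418 — 3 statements merged into one kernel-verified Lean document; each statement's English description precedes it below -/
import Mathlib

section
/- Fix n ≥ 2. For each dimension d, let X₁, …, X_n be i.i.d. uniform random points in [0,1]^d, and for each pair i < j let τ_{ij}^{(d)} = (Σ_{k=1}^d min(|X_i^k − X_j^k|, 1−|X_i^k − X_j^k|)² − d/12)/√d. Then as d → ∞ the law of the random vector (τ_{ij}^{(d)})_{1 ≤ i < j ≤ n} ∈ ℝ^{n(n−1)/2} converges weakly to the product of n(n−1)/2 independent centered Gaussian distributions each of variance 1/180. -/
open MeasureTheory ProbabilityTheory Filter Topology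

/-- The uniform probability measure on `[0,1]`. -/
noncomputable def unif01 : Measure ℝ := volume.restrict (Set.Icc (0:ℝ) 1)

/-- The law of `n` i.i.d. uniform random points in `[0,1]^d`. -/
noncomputable def cubeLaw (n d : ℕ) : Measure (Fin n → Fin d → ℝ) :=
  Measure.pi fun _ => Measure.pi fun _ => unif01

/-- Index type of (unordered) pairs `i < j` of nodes. -/
abbrev Pairs (n : ℕ) := {p : Fin n × Fin n // p.1 < p.2}

/-- The normalised squared torus distances
`τ_{ij} = (Σ_k min(|X_i^k−X_j^k|, 1−|X_i^k−X_j^k|)² − d/12)/√d`. -/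
noncomputable def torusTau (n d : ℕ) (ω : Fin n → Fin d → ℝ) (p : Pairs n) : ℝ :=
  ((∑ k : Fin d,
      (min |ω p.1.1 k - ω p.1.2 k| (1 - |ω p.1.1 k - ω p.1.2 k|)) ^ 2) - d / 12)
    / Real.sqrt d

/-!
Write `h(a, b)` for the squared distance of `a` and `b` on the circle `ℝ/ℤ`. The `d` coordinates of
the `n` points are i.i.d. vectors `x = (x₁, …, xₙ)`, so `τ` is a normalised sum of i.i.d. copies of
`(h(xᵢ, xⱼ))_{i < j}`, and by the Cramér–Wold device the one-dimensional central limit theorem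
yields a Gaussian limit with the same covariance. By translation invariance, averaging `h(a, b)`
over `a` alone already gives the mean `∫_{-1/2}^{1/2} u² du = 1/12` for each fixed `b`. Of two
distinct pairs, one has an endpoint outside the other; averaging over this endpoint first shows that
the two distances are uncorrelated. The common variance is
`∫_{-1/2}^{1/2} u⁴ du - (1/12)² = 1/80 - 1/144 = 1/180`.
-/

open Function
open scoped RealInnerProductSpace NNReal

section Convergence

section Topological

variable {E ι : Type*} {l : Filter ι}
  [TopologicalSpace E] [MeasurableSpace E] [OpensMeasurableSpace E]
  {Ω : ι → Type*} {mΩ : ∀ i, MeasurableSpace (Ω i)} {μ : ∀ i, Measure (Ω i)}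
  [∀ i, IsProbabilityMeasure (μ i)]
  {Ω' : Type*} {mΩ' : MeasurableSpace Ω'} {μ' : Measure Ω'} [IsProbabilityMeasure μ']
  {X : ∀ i, Ω i → E} {Z : Ω' → E}

theorem tendsto_integral_of_tendstoInDistribution
    (h : TendstoInDistribution X l Z μ μ') (f : BoundedContinuousFunction E ℝ) :
    Tendsto (fun i => ∫ ω, f (X i ω) ∂μ i) l (𝓝 (∫ ω, f (Z ω) ∂μ')) := by
  have hf (ρ : Measure E) : AEStronglyMeasurable f ρ :=
    f.continuous.stronglyMeasurable.aestronglyMeasurable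
  simpa only [ProbabilityMeasure.coe_mk, integral_map (h.forall_aemeasurable _) (hf _),
    integral_map h.aemeasurable_limit (hf _)]
    using ProbabilityMeasure.tendsto_iff_forall_integral_tendsto.mp h.tendsto f

theorem tendstoInDistribution_of_forall_identDistrib
    {Ω'' : ι → Type*} {mΩ'' : ∀ i, MeasurableSpace (Ω'' i)} {ν : ∀ i, Measure (Ω'' i)}
    [∀ i, IsProbabilityMeasure (ν i)] {Y : ∀ i, Ω'' i → E}
    (h : TendstoInDistribution Y l Z ν μ') (hXY : ∀ i, IdentDistrib (X i) (Y i) (μ i) (ν i)) :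
    TendstoInDistribution X l Z μ μ' where
  forall_aemeasurable i := (hXY i).aemeasurable_fst
  aemeasurable_limit := h.aemeasurable_limit
  tendsto := by simpa only [(hXY _).map_eq] using h.tendsto

end Topological

theorem charFun_map_eq_charFun_map_inner_one {E : Type*} [NormedAddCommGroup E]
    [InnerProductSpace ℝ E] [MeasurableSpace E] [BorelSpace E]
    {Ω : Type*} {mΩ : MeasurableSpace Ω} {μ : Measure Ω} {X : Ω → E} (hX : AEMeasurable X μ)
    (t : E) : charFun (μ.map X) t = charFun (μ.map fun ω => ⟪t, X ω⟫) 1 := by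
  rw [charFun_eq_charFunDual_toDualMap, charFunDual_eq_charFun_map_one,
    AEMeasurable.map_map_of_aemeasurable (by fun_prop) hX]
  rfl

theorem tendstoInDistribution_of_forall_inner {E : Type*} [NormedAddCommGroup E]
    [InnerProductSpace ℝ E] [FiniteDimensional ℝ E] [MeasurableSpace E] [BorelSpace E]
    {Ω : ℕ → Type*} {mΩ : ∀ n, MeasurableSpace (Ω n)} {μ : ∀ n, Measure (Ω n)}
    [∀ n, IsProbabilityMeasure (μ n)]
    {Ω' : Type*} {mΩ' : MeasurableSpace Ω'} {μ' : Measure Ω'} [IsProbabilityMeasure μ']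
    {X : ∀ n, Ω n → E} {Z : Ω' → E}
    (hX : ∀ n, AEMeasurable (X n) (μ n)) (hZ : AEMeasurable Z μ')
    (h : ∀ t : E, TendstoInDistribution (fun n ω => ⟪t, X n ω⟫) atTop (fun ω => ⟪t, Z ω⟫) μ μ') :
    TendstoInDistribution X atTop Z μ μ' where
  forall_aemeasurable := hX
  aemeasurable_limit := hZ
  tendsto := ProbabilityMeasure.tendsto_of_tendsto_charFun fun t => by
    simpa only [ProbabilityMeasure.coe_mk, charFun_map_eq_charFun_map_inner_one (hX _),
      charFun_map_eq_charFun_map_inner_one hZ]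
      using ProbabilityMeasure.tendsto_iff_tendsto_charFun.mp (h t).tendsto 1

end Convergence

section MultivariateCLT

variable {Ω Ω' : Type*} {mΩ : MeasurableSpace Ω} {mΩ' : MeasurableSpace Ω'}
  {P : Measure Ω} {P' : Measure Ω'}

section InnerProductSpace

variable {E : Type*} [NormedAddCommGroup E] [InnerProductSpace ℝ E]
  [MeasurableSpace E] [BorelSpace E]

theorem covarianceBilin_map_self [CompleteSpace E] [SecondCountableTopology E] [IsFiniteMeasure P]
    {X : Ω → E} (hX : MemLp X 2 P) (t : E) :
    covarianceBilin (P.map X) t t = Var[fun ω => ⟪t, X ω⟫; P] := by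
  have hX_meas : AEMeasurable X P := hX.aestronglyMeasurable.aemeasurable
  have hX_map : MemLp id 2 (P.map X) :=
    (memLp_map_measure_iff aestronglyMeasurable_id hX_meas).mpr hX
  rw [covarianceBilin_self hX_map, variance_map (by fun_prop) hX_meas]
  rfl

theorem hasLaw_inner_of_hasGaussianLaw [CompleteSpace E] [SecondCountableTopology E]
    {Y : Ω → E} (hY : HasGaussianLaw Y P) (t : E) :
    HasLaw (fun ω => ⟪t, Y ω⟫)
      (gaussianReal ⟪t, P[Y]⟫ (covarianceBilin (P.map Y) t t).toNNReal) P where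
  aemeasurable := by have := hY.aemeasurable; fun_prop
  map_eq := by
    have := hY.isProbabilityMeasure
    have h_inner : HasGaussianLaw (fun ω => ⟪t, Y ω⟫) P := hY.map (innerSL ℝ t)
    rw [h_inner.map_eq_gaussianReal, integral_inner hY.integrable,
      covarianceBilin_map_self hY.memLp_two]

theorem tendstoInDistribution_inv_sqrt_smul_sum_sub [FiniteDimensional ℝ E]
    [IsProbabilityMeasure P] [IsProbabilityMeasure P'] {X : ℕ → Ω → E} {Y : Ω' → E}
    (hX : MemLp (X 0) 2 P) (hindep : iIndepFun X P) (hident : ∀ k, IdentDistrib (X k) (X 0) P P)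
    (hY : HasGaussianLaw Y P') (hY_mean : P'[Y] = 0)
    (hY_cov : covarianceBilin (P'.map Y) = covarianceBilin (P.map (X 0))) :
    TendstoInDistribution
      (fun (n : ℕ) ω => (√n)⁻¹ • (∑ k ∈ Finset.range n, X k ω - (n : ℝ) • P[X 0])) atTop Y
      (fun _ => P) P' := by
  have hX_meas k : AEMeasurable (X k) P := (hident k).aemeasurable_fst
  refine tendstoInDistribution_of_forall_inner (by fun_prop) hY.aemeasurable fun t => ?_
  have h_law : HasLaw (fun ω => ⟪t, Y ω⟫)
      (gaussianReal 0 Var[fun ω => ⟪t, X 0 ω⟫; P].toNNReal) P' := by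
    simpa only [hY_mean, inner_zero_right, hY_cov, covarianceBilin_map_self hX]
      using hasLaw_inner_of_hasGaussianLaw hY t
  have h_clt := tendstoInDistribution_inv_sqrt_mul_sum_sub (X := fun k ω => ⟪t, X k ω⟫) h_law
    (hX.const_inner t) (hindep.comp (fun _ x => ⟪t, x⟫) fun _ => by fun_prop)
    fun k => (hident k).comp (by fun_prop)
  simpa only [inner_smul_right, inner_sub_right, inner_sum,
    integral_inner (hX.integrable one_le_two)] using h_clt

end InnerProductSpace

section Pi

variable {ι : Type*} [Fintype ι]

theorem hasGaussianLaw_toLp_pi_gaussianReal (m : ι → ℝ) (v : ι → ℝ≥0) :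
    HasGaussianLaw (WithLp.toLp 2 : (ι → ℝ) → EuclideanSpace ℝ ι)
      (Measure.pi fun i => gaussianReal (m i) (v i)) := by
  refine HasGaussianLaw.toLp_pi 2 (X := fun i (x : ι → ℝ) => x i)
    (iIndepFun.hasGaussianLaw (fun i => ⟨?_⟩) ?_)
  · rw [(measurePreserving_eval _ i).map_eq]
    infer_instance
  · exact iIndepFun_pi fun _ => aemeasurable_id

theorem integral_toLp_pi {μ : ι → Measure ℝ} [∀ i, IsProbabilityMeasure (μ i)]
    (hμ : ∀ i, Integrable id (μ i)) :
    ∫ x, (WithLp.toLp 2 x : EuclideanSpace ℝ ι) ∂Measure.pi μ =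
      WithLp.toLp 2 fun i => ∫ u, u ∂μ i := by
  ext i
  rw [eval_integral_piLp fun i => integrable_comp_eval (f := id) (hμ i)]
  exact integral_comp_eval (μ := μ) (f := id) (hμ i).aestronglyMeasurable

theorem covariance_eval_pi [DecidableEq ι] {μ : ι → Measure ℝ} [∀ i, IsProbabilityMeasure (μ i)]
    (hμ : ∀ i, MemLp id 2 (μ i)) (i j : ι) :
    cov[fun x : ι → ℝ => x i, fun x => x j; Measure.pi μ] =
      if i = j then Var[id; μ i] else 0 := by
  split_ifs with hij
  · subst hij
    rw [covariance_self (measurable_pi_apply i).aemeasurable]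
    exact (measurePreserving_eval μ i).hasLaw.variance_eq
  · have h_indep : iIndepFun (fun k (x : ι → ℝ) => x k) (Measure.pi μ) :=
      iIndepFun_pi fun _ => aemeasurable_id
    exact (h_indep.indepFun hij).covariance_eq_zero
      ((hμ i).comp_measurePreserving (measurePreserving_eval μ i))
      ((hμ j).comp_measurePreserving (measurePreserving_eval μ j))

theorem tendstoInDistribution_inv_sqrt_mul_sum_sub_pi [DecidableEq ι] [IsProbabilityMeasure P]
    {X : ℕ → Ω → ι → ℝ} {v : ι → ℝ≥0} (hX : ∀ i, MemLp (fun ω => X 0 ω i) 2 P)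
    (hindep : iIndepFun X P) (hident : ∀ k, IdentDistrib (X k) (X 0) P P)
    (hcov : ∀ i j, cov[fun ω => X 0 ω i, fun ω => X 0 ω j; P] = if i = j then (v i : ℝ) else 0) :
    TendstoInDistribution
      (fun (n : ℕ) ω i => (√n)⁻¹ * (∑ k ∈ Finset.range n, X k ω i - n * ∫ ω, X 0 ω i ∂P)) atTop
      (id : (ι → ℝ) → ι → ℝ) (fun _ => P) (Measure.pi fun i => gaussianReal 0 (v i)) := by
  have h_cov : covarianceBilin ((Measure.pi fun i => gaussianReal 0 (v i)).map
      (WithLp.toLp 2 : (ι → ℝ) → EuclideanSpace ℝ ι)) =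
      covarianceBilin (P.map fun ω => WithLp.toLp 2 (X 0 ω)) := by
    ext x y
    rw [covarianceBilin_apply_pi (X := fun i (x : ι → ℝ) => x i)
        fun i => (memLp_id_gaussianReal 2).comp_measurePreserving (measurePreserving_eval _ i),
      covarianceBilin_apply_pi (X := fun i ω => X 0 ω i) hX]
    simp only [hcov, covariance_eval_pi fun _ => memLp_id_gaussianReal 2, variance_id_gaussianReal]
  have h_limit_mean : ∫ x, (WithLp.toLp 2 x : EuclideanSpace ℝ ι)
      ∂(Measure.pi fun i => gaussianReal 0 (v i)) = 0 := by
    rw [integral_toLp_pi fun i => (memLp_id_gaussianReal 1).integrable le_rfl]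
    simp only [integral_id_gaussianReal]
    rfl
  have h_memLp : MemLp (fun ω => (WithLp.toLp 2 (X 0 ω) : EuclideanSpace ℝ ι)) 2 P :=
    MemLp.of_eval_piLp hX
  have h_clt := tendstoInDistribution_inv_sqrt_smul_sum_sub
    (X := fun k ω => (WithLp.toLp 2 (X k ω) : EuclideanSpace ℝ ι)) h_memLp
    (hindep.comp (fun _ => WithLp.toLp 2) fun _ => by fun_prop)
    (fun k => (hident k).comp (by fun_prop))
    (hasGaussianLaw_toLp_pi_gaussianReal 0 v) h_limit_mean h_cov
  have h_mean i : (∫ ω, (WithLp.toLp 2 (X 0 ω) : EuclideanSpace ℝ ι) ∂P) i = ∫ ω, X 0 ω i ∂P :=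
    eval_integral_piLp (fun i => (hX i).integrable one_le_two) i
  convert! h_clt.continuous_comp (PiLp.continuous_ofLp 2 fun _ : ι => ℝ) using 4 with n
  simp [h_mean]

end Pi

end MultivariateCLT

section ProductMeasure

section Pi

variable {ι : Type*} [Fintype ι] {X : ι → Type*} [∀ i, MeasurableSpace (X i)]
  (μ : ∀ i, Measure (X i)) [∀ i, IsProbabilityMeasure (μ i)]

theorem measurePreserving_eval_pair {i j : ι} (hij : i ≠ j) :
    MeasurePreserving (fun x : ∀ k, X k => (x i, x j)) (Measure.pi μ) ((μ i).prod (μ j)) where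
  measurable := by fun_prop
  map_eq := by rw [← Measure.infinitePi_eq_pi, Measure.infinitePi_map_eval_prod hij]

theorem measurePreserving_update [DecidableEq ι] (i : ι) :
    MeasurePreserving (fun p : (∀ j, X j) × X i => update p.1 i p.2)
      ((Measure.pi μ).prod (μ i)) (Measure.pi μ) where
  measurable := measurable_update'
  map_eq := by
    refine (Measure.pi_eq fun s hs => ?_).symm
    rw [Measure.map_apply measurable_update' (.univ_pi hs)]
    have h_preimage : (fun p : (∀ j, X j) × X i => update p.1 i p.2) ⁻¹' Set.univ.pi s =
        Set.univ.pi (update s i Set.univ) ×ˢ s i := by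
      ext ⟨x, u⟩
      simp only [Set.mem_preimage, Set.mem_prod, Set.mem_pi, Set.mem_univ, true_implies]
      rw [forall_update_iff x fun j y => y ∈ s j, and_comm,
        forall_update_iff s fun j t => x j ∈ t]
      simp
    have h_erase : ∏ j ∈ Finset.univ.erase i, μ j (update s i Set.univ j) =
        ∏ j ∈ Finset.univ.erase i, μ j (s j) :=
      Finset.prod_congr rfl fun j hj => by rw [update_of_ne (Finset.ne_of_mem_erase hj)]
    rw [h_preimage, Measure.prod_prod, Measure.pi_pi,
      ← Finset.mul_prod_erase _ _ (Finset.mem_univ i), h_erase, update_self, measure_univ, one_mul,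
      Finset.prod_erase_mul _ _ (Finset.mem_univ i)]

variable {μ} in
theorem integral_pi_eq_integral_integral_update [DecidableEq ι] {F : Type*}
    [NormedAddCommGroup F] [NormedSpace ℝ F] {f : (∀ i, X i) → F}
    (hf : Integrable f (Measure.pi μ)) (i : ι) :
    ∫ x, f x ∂Measure.pi μ = ∫ x, ∫ u, f (update x i u) ∂μ i ∂Measure.pi μ := by
  have h_update := measurePreserving_update μ i
  calc ∫ x, f x ∂Measure.pi μ
      = ∫ p, f (update p.1 i p.2) ∂(Measure.pi μ).prod (μ i) :=
        (h_update.hasLaw.integral_comp hf.aestronglyMeasurable).symm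
    _ = ∫ x, ∫ u, f (update x i u) ∂μ i ∂Measure.pi μ :=
        integral_prod _ (h_update.integrable_comp_of_integrable hf)

end Pi

theorem infinitePi_map_transpose_comp {ι κ κ' E : Type*} [MeasurableSpace E] (ν : Measure E)
    [IsProbabilityMeasure ν] {f : κ' → κ} (hf : Injective f) :
    (Measure.infinitePi fun _ : κ => Measure.infinitePi fun _ : ι => ν).map
        (fun x i k => x (f k) i) =
      Measure.infinitePi fun _ : ι => Measure.infinitePi fun _ : κ' => ν := by
  have hinj : Injective (fun p : ι × κ' => (f p.2, p.1)) := fun p q h => by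
    simp only [Prod.mk.injEq] at h
    exact Prod.ext h.2 (hf h.1)
  rw [← Measure.infinitePi_map_curry fun (_ : κ) (_ : ι) => ν,
    ← Measure.infinitePi_map_curry fun (_ : ι) (_ : κ') => ν,
    ← Measure.map_infinitePi_infinitePi_of_inj (P := fun _ : κ × ι => ν) hinj,
    Measure.map_map (by fun_prop) (by fun_prop), Measure.map_map (by fun_prop) (by fun_prop)]
  rfl

theorem identDistrib_id_transpose_infinitePi {ι E : Type*} [Fintype ι] [MeasurableSpace E]
    (ν : Measure E) [IsProbabilityMeasure ν] (d : ℕ) :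
    IdentDistrib id (fun (x : ℕ → ι → E) i (k : Fin d) => x k i)
      (Measure.pi fun _ : ι => Measure.pi fun _ : Fin d => ν)
      (Measure.infinitePi fun _ => Measure.pi fun _ => ν) where
  aemeasurable_fst := aemeasurable_id
  aemeasurable_snd := Measurable.aemeasurable (by fun_prop)
  map_eq := by
    simp only [Measure.map_id, ← Measure.infinitePi_eq_pi]
    exact (infinitePi_map_transpose_comp ν Fin.val_injective).symm

end ProductMeasure

theorem tendstoInDistribution_inv_sqrt_mul_sum_sub_infinitePi {S ι : Type*} [Fintype ι]
    [DecidableEq ι] [MeasurableSpace S] {ν : Measure S} [IsProbabilityMeasure ν]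
    {Φ : S → ι → ℝ} {v : ι → ℝ≥0}
    (hΦ_meas : Measurable Φ) (hΦ : ∀ i, MemLp (fun x => Φ x i) 2 ν)
    (hcov : ∀ i j, cov[fun x => Φ x i, fun x => Φ x j; ν] = if i = j then (v i : ℝ) else 0) :
    TendstoInDistribution
      (fun (d : ℕ) (ω : ℕ → S) i =>
        (√d)⁻¹ * (∑ k ∈ Finset.range d, Φ (ω k) i - d * ∫ x, Φ x i ∂ν)) atTop
      (id : (ι → ℝ) → ι → ℝ) (fun _ => Measure.infinitePi fun _ => ν)
      (Measure.pi fun i => gaussianReal 0 (v i)) := by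
  have h_eval (k : ℕ) :
      MeasurePreserving (fun ω : ℕ → S => ω k) (Measure.infinitePi fun _ => ν) ν :=
    ⟨by fun_prop, Measure.infinitePi_map_eval _ k⟩
  have h_ident (k : ℕ) : IdentDistrib (fun ω : ℕ → S => Φ (ω k)) (fun ω => Φ (ω 0))
      (Measure.infinitePi fun _ => ν) (Measure.infinitePi fun _ => ν) :=
    ((h_eval k).hasLaw.identDistrib (h_eval 0).hasLaw).comp hΦ_meas
  have h_cov i j : cov[fun ω : ℕ → S => Φ (ω 0) i, fun ω => Φ (ω 0) j;
      Measure.infinitePi fun _ => ν] = if i = j then (v i : ℝ) else 0 :=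
    ((h_eval 0).hasLaw.covariance_fun_comp (f := fun x => Φ x i) (g := fun x => Φ x j)
      (by fun_prop) (by fun_prop)).trans (hcov i j)
  have h_mean i : ∫ ω : ℕ → S, Φ (ω 0) i ∂(Measure.infinitePi fun _ => ν) = ∫ x, Φ x i ∂ν :=
    (h_eval 0).hasLaw.integral_comp (hΦ i).aestronglyMeasurable
  simpa only [h_mean] using tendstoInDistribution_inv_sqrt_mul_sum_sub_pi
    (fun i => (hΦ i).comp_measurePreserving (h_eval 0)) (iIndepFun_infinitePi fun _ => hΦ_meas)
    h_ident h_cov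

/-- A symmetric square-integrable kernel `h` such that `h - m` is degenerate in the sense of
Hoeffding's theory of U-statistics: averaging either argument alone already gives the mean `m`. Then
`h(xᵢ, xⱼ)` over distinct pairs of i.i.d. `xᵢ` are uncorrelated. The average is required in the
first argument only; symmetry supplies the second. -/
structure DegenerateKernel {E : Type*} [MeasurableSpace E] (h : E → E → ℝ) (μ : Measure E)
    (m : ℝ) : Prop where
  symm : ∀ a b, h a b = h b a
  measurable : Measurable (uncurry h)
  memLp : MemLp (uncurry h) 2 (μ.prod μ)
  integral_left : ∀ᵐ b ∂μ, ∫ a, h a b ∂μ = m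

namespace DegenerateKernel

variable {E : Type*} [MeasurableSpace E] {μ : Measure E} [IsProbabilityMeasure μ]
  {h : E → E → ℝ} {m : ℝ}

theorem integral_prod (hh : DegenerateKernel h μ m) : ∫ p, uncurry h p ∂(μ.prod μ) = m := by
  rw [integral_prod_symm _ (hh.memLp.integrable one_le_two)]
  simp only [uncurry_apply_pair]
  rw [integral_congr_ae hh.integral_left]
  simp

theorem ae_integral_sub_eq_zero (hh : DegenerateKernel h μ m) :
    ∀ᵐ b ∂μ, ∫ a, (h a b - m) ∂μ = 0 := by
  have h_integrable : ∀ᵐ b ∂μ, Integrable (fun a => h a b) μ :=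
    (hh.memLp.integrable one_le_two).prod_left_ae
  filter_upwards [hh.integral_left, h_integrable] with b hb hb_int
  simp [integral_sub hb_int (integrable_const m), hb]

variable {ι : Type*} [Fintype ι] {i j k l : ι}

theorem memLp_pi (hh : DegenerateKernel h μ m) (hij : i ≠ j) :
    MemLp (fun x : ι → E => h (x i) (x j)) 2 (Measure.pi fun _ => μ) :=
  hh.memLp.comp_measurePreserving (measurePreserving_eval_pair (fun _ => μ) hij)

theorem integral_pi (hh : DegenerateKernel h μ m) (hij : i ≠ j) :
    ∫ x : ι → E, h (x i) (x j) ∂(Measure.pi fun _ => μ) = m := by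
  rw [← hh.integral_prod]
  exact (measurePreserving_eval_pair (fun _ => μ) hij).hasLaw.integral_comp
    hh.memLp.aestronglyMeasurable

theorem covariance_pi_eq_zero (hh : DegenerateKernel h μ m) (hij : i ≠ j) (hik : i ≠ k)
    (hil : i ≠ l) (hkl : k ≠ l) :
    cov[fun x : ι → E => h (x i) (x j), fun x => h (x k) (x l); Measure.pi fun _ => μ] = 0 := by
  classical
  have h_int : Integrable (fun x : ι → E => (h (x i) (x j) - m) * (h (x k) (x l) - m))
      (Measure.pi fun _ => μ) :=
    ((hh.memLp_pi hij).sub (memLp_const m)).integrable_mul ((hh.memLp_pi hkl).sub (memLp_const m))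
  have h_degenerate : ∀ᵐ x : ι → E ∂Measure.pi fun _ => μ, ∫ u, (h u (x j) - m) ∂μ = 0 :=
    (measurePreserving_eval (fun _ => μ) j).quasiMeasurePreserving.ae hh.ae_integral_sub_eq_zero
  rw [covariance, hh.integral_pi hij, hh.integral_pi hkl,
    integral_pi_eq_integral_integral_update h_int i]
  simp only [update_self, update_of_ne hij.symm, update_of_ne hik.symm, update_of_ne hil.symm,
    integral_mul_const]
  rw [integral_congr_ae (h_degenerate.mono fun x hx => by rw [hx, zero_mul])]
  exact integral_zero _ _

theorem covariance_pi_pairs (hh : DegenerateKernel h μ m) {n : ℕ} (p q : Pairs n) :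
    cov[fun x : Fin n → E => h (x p.1.1) (x p.1.2), fun x => h (x q.1.1) (x q.1.2);
      Measure.pi fun _ => μ] = if p = q then Var[uncurry h; μ.prod μ] else 0 := by
  obtain ⟨⟨i, j⟩, hij⟩ := p
  obtain ⟨⟨k, l⟩, hkl⟩ := q
  dsimp only at hij hkl ⊢
  split_ifs with hpq
  · obtain ⟨rfl, rfl⟩ : i = k ∧ j = l := by simpa using hpq
    rw [covariance_self (hh.memLp_pi hij.ne).aestronglyMeasurable.aemeasurable]
    exact (measurePreserving_eval_pair (fun _ => μ) hij.ne).variance_fun_comp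
      hh.measurable.aemeasurable
  · have h_endpoint : (i ≠ k ∧ i ≠ l) ∨ (j ≠ k ∧ j ≠ l) := by
      have : ¬ (i = k ∧ j = l) := by simpa using hpq
      omega
    obtain ⟨hik, hil⟩ | ⟨hjk, hjl⟩ := h_endpoint
    · exact hh.covariance_pi_eq_zero hij.ne hik hil hkl.ne
    · simp only [fun x : Fin n → E => hh.symm (x i) (x j)]
      exact hh.covariance_pi_eq_zero hij.ne' hjk hjl hkl.ne

theorem tendstoInDistribution_pairs (hh : DegenerateKernel h μ m) {v : ℝ≥0}
    (hv : Var[uncurry h; μ.prod μ] = v) (n : ℕ) :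
    TendstoInDistribution
      (fun (d : ℕ) (ω : Fin n → Fin d → E) (p : Pairs n) =>
        (√d)⁻¹ * (∑ k, h (ω p.1.1 k) (ω p.1.2 k) - d * m)) atTop
      (id : (Pairs n → ℝ) → Pairs n → ℝ)
      (fun _ => Measure.pi fun _ => Measure.pi fun _ => μ)
      (Measure.pi fun _ => gaussianReal 0 v) := by
  have h_meas := hh.measurable
  have h_clt := tendstoInDistribution_inv_sqrt_mul_sum_sub_infinitePi
    (ν := Measure.pi fun _ : Fin n => μ)
    (Φ := fun x (p : Pairs n) => h (x p.1.1) (x p.1.2)) (v := fun _ => v)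
    (by fun_prop) (fun p => hh.memLp_pi p.2.ne) (fun p q => by rw [hh.covariance_pi_pairs, hv])
  simp only [fun p : Pairs n => hh.integral_pi p.2.ne, Finset.sum_range] at h_clt
  refine tendstoInDistribution_of_forall_identDistrib h_clt fun d => ?_
  have h_meas_tau : Measurable fun (ω : Fin n → Fin d → E) (p : Pairs n) =>
      (√d)⁻¹ * (∑ k, h (ω p.1.1 k) (ω p.1.2 k) - d * m) := by
    fun_prop
  exact (identDistrib_id_transpose_infinitePi μ d).comp h_meas_tau

end DegenerateKernel

section Torus

instance isProbabilityMeasure_unif01 : IsProbabilityMeasure unif01 :=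
  ⟨by simp [unif01]⟩

/-- The squared distance of `a` and `b` on the circle `ℝ/ℤ`, as a kernel on `[0, 1]`; the formula is
the distance of the circle only for `|a - b| ≤ 1`. -/
noncomputable def torusSqDist (a b : ℝ) : ℝ := (min |a - b| (1 - |a - b|)) ^ 2

theorem norm_coe_unitAddCircle_of_abs_le_half {v : ℝ} (hv : |v| ≤ 1 / 2) :
    ‖(v : UnitAddCircle)‖ = |v| :=
  (AddCircle.norm_coe_eq_abs_iff 1 one_ne_zero).mpr (by rwa [abs_one])

theorem norm_coe_abs_unitAddCircle (v : ℝ) :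
    ‖((|v| : ℝ) : UnitAddCircle)‖ = ‖(v : UnitAddCircle)‖ := by
  rcases abs_choice v with hv | hv <;> simp [hv]

theorem norm_coe_unitAddCircle_of_abs_le_one {v : ℝ} (hv : |v| ≤ 1) :
    ‖(v : UnitAddCircle)‖ = min |v| (1 - |v|) := by
  rcases le_total |v| (1 / 2) with h_half | h_half
  · rw [norm_coe_unitAddCircle_of_abs_le_half h_half, min_eq_left (by linarith)]
  · have h_one_sub : |(1 - |v|)| = 1 - |v| := abs_of_nonneg (by linarith)
    calc ‖(v : UnitAddCircle)‖
        = ‖((1 - |v| : ℝ) : UnitAddCircle)‖ := by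
          rw [AddCircle.coe_sub, AddCircle.coe_period, zero_sub, norm_neg,
            norm_coe_abs_unitAddCircle]
      _ = 1 - |v| := by
          rw [norm_coe_unitAddCircle_of_abs_le_half (by linarith), h_one_sub]
      _ = min |v| (1 - |v|) := (min_eq_right (by linarith)).symm

theorem measurable_uncurry_torusSqDist : Measurable (uncurry torusSqDist) := by
  unfold torusSqDist uncurry; fun_prop

theorem torusSqDist_eq_norm_sq {a b : ℝ} (ha : a ∈ Set.Icc (0 : ℝ) 1)
    (hb : b ∈ Set.Icc (0 : ℝ) 1) : torusSqDist a b = ‖(a : UnitAddCircle) - b‖ ^ 2 := by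
  rw [torusSqDist, ← AddCircle.coe_sub,
    norm_coe_unitAddCircle_of_abs_le_one (Real.dist_le_of_mem_Icc_01 ha hb)]

section Integral

variable {F : Type*} [NormedAddCommGroup F] [NormedSpace ℝ F]

theorem integral_comp_coe_unif01 (f : UnitAddCircle → F) :
    ∫ a, f a ∂unif01 = ∫ x : UnitAddCircle, f x := by
  rw [unif01, integral_Icc_eq_integral_Ioc, ← intervalIntegral.integral_of_le zero_le_one]
  simpa using UnitAddCircle.intervalIntegral_preimage 0 f

theorem integral_comp_norm_unitAddCircle (f : ℝ → F) :
    ∫ x : UnitAddCircle, f ‖x‖ = ∫ u in (-1 / 2 : ℝ)..1 / 2, f |u| := by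
  rw [← UnitAddCircle.intervalIntegral_preimage (-1 / 2),
    show (-1 / 2 + 1 : ℝ) = 1 / 2 by norm_num]
  refine intervalIntegral.integral_congr fun u hu => ?_
  rw [Set.uIcc_of_le (by norm_num)] at hu
  have hu_half : |u| ≤ 1 / 2 := abs_le.mpr ⟨by linarith [hu.1], hu.2⟩
  simp only [norm_coe_unitAddCircle_of_abs_le_half hu_half]

theorem integral_comp_torusSqDist (f : ℝ → F) {b : ℝ} (hb : b ∈ Set.Icc (0 : ℝ) 1) :
    ∫ a, f (torusSqDist a b) ∂unif01 = ∫ u in (-1 / 2 : ℝ)..1 / 2, f (u ^ 2) := by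
  calc ∫ a, f (torusSqDist a b) ∂unif01
      = ∫ a : ℝ, f (‖(a : UnitAddCircle) - b‖ ^ 2) ∂unif01 :=
        setIntegral_congr_fun measurableSet_Icc fun a ha => by
          simp only [torusSqDist_eq_norm_sq ha hb]
    _ = ∫ x : UnitAddCircle, f (‖x - b‖ ^ 2) :=
        integral_comp_coe_unif01 fun x => f (‖x - b‖ ^ 2)
    _ = ∫ x : UnitAddCircle, f (‖x‖ ^ 2) :=
        integral_sub_right_eq_self (fun x : UnitAddCircle => f (‖x‖ ^ 2)) _
    _ = ∫ u in (-1 / 2 : ℝ)..1 / 2, f (u ^ 2) := by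
        rw [integral_comp_norm_unitAddCircle fun t => f (t ^ 2)]
        simp only [sq_abs]

end Integral

theorem integral_torusSqDist {b : ℝ} (hb : b ∈ Set.Icc (0 : ℝ) 1) :
    ∫ a, torusSqDist a b ∂unif01 = 1 / 12 := by
  rw [integral_comp_torusSqDist (fun t => t) hb, integral_pow]
  norm_num

theorem integral_torusSqDist_sq {b : ℝ} (hb : b ∈ Set.Icc (0 : ℝ) 1) :
    ∫ a, (torusSqDist a b) ^ 2 ∂unif01 = 1 / 80 := by
  rw [integral_comp_torusSqDist (fun t => t ^ 2) hb]
  simp only [← pow_mul, integral_pow]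
  norm_num

theorem abs_torusSqDist_le_one {a b : ℝ} (ha : a ∈ Set.Icc (0 : ℝ) 1)
    (hb : b ∈ Set.Icc (0 : ℝ) 1) : |torusSqDist a b| ≤ 1 := by
  rw [torusSqDist_eq_norm_sq ha hb, abs_of_nonneg (by positivity)]
  have h_norm : ‖(a : UnitAddCircle) - b‖ ≤ 1 / 2 := by
    simpa using AddCircle.norm_le_half_period 1 one_ne_zero
  nlinarith [norm_nonneg ((a : UnitAddCircle) - b)]

theorem ae_mem_Icc_unif01 : ∀ᵐ a ∂unif01, a ∈ Set.Icc (0 : ℝ) 1 :=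
  ae_restrict_mem measurableSet_Icc

theorem memLp_torusSqDist : MemLp (uncurry torusSqDist) 2 (unif01.prod unif01) := by
  refine MemLp.of_bound measurable_uncurry_torusSqDist.aestronglyMeasurable 1 ?_
  filter_upwards [Measure.quasiMeasurePreserving_fst.ae ae_mem_Icc_unif01,
    Measure.quasiMeasurePreserving_snd.ae ae_mem_Icc_unif01] with p h_fst h_snd
  exact abs_torusSqDist_le_one h_fst h_snd

theorem degenerateKernel_torusSqDist : DegenerateKernel torusSqDist unif01 (1 / 12) where
  symm a b := by rw [torusSqDist, torusSqDist, abs_sub_comm]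
  measurable := measurable_uncurry_torusSqDist
  memLp := memLp_torusSqDist
  integral_left := ae_mem_Icc_unif01.mono fun _ => integral_torusSqDist

theorem variance_torusSqDist : Var[uncurry torusSqDist; unif01.prod unif01] = 1 / 180 := by
  have h_sq : ∫ p, (uncurry torusSqDist p) ^ 2 ∂(unif01.prod unif01) = 1 / 80 := by
    rw [integral_prod_symm _ memLp_torusSqDist.integrable_sq]
    simp only [uncurry_apply_pair]
    rw [integral_congr_ae (ae_mem_Icc_unif01.mono fun _ => integral_torusSqDist_sq)]
    simp
  rw [variance_eq_sub memLp_torusSqDist, degenerateKernel_torusSqDist.integral_prod]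
  simp only [Pi.pow_apply]
  rw [h_sq]
  norm_num

theorem torusTau_eq (n d : ℕ) :
    torusTau n d = fun ω p =>
      (√d)⁻¹ * (∑ k, torusSqDist (ω p.1.1 k) (ω p.1.2 k) - d * (1 / 12)) := by
  ext ω p
  simp only [torusTau, torusSqDist]
  ring

end Torus

/-- As `d → ∞`, the vector of normalised squared torus pair distances of `n` i.i.d.
uniform points in `[0,1]^d` converges weakly to a product of `n(n−1)/2` independent
centered Gaussians of variance `1/180`. -/
theorem stmt_12 (n : ℕ) (hn : 2 ≤ n) :
    ∀ f : BoundedContinuousFunction (Pairs n → ℝ) ℝ,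
      Tendsto (fun d : ℕ => ∫ ω, f (torusTau n d ω) ∂(cubeLaw n d)) atTop
        (𝓝 (∫ v, f v ∂(Measure.pi fun _ : Pairs n => gaussianReal 0 (1/180 : NNReal)))) := by
  intro f
  have h_var : Var[uncurry torusSqDist; unif01.prod unif01] = (1 / 180 : ℝ≥0) := by
    rw [variance_torusSqDist]
    norm_num
  simp only [torusTau_eq]
  exact tendsto_integral_of_tendstoInDistribution
    (degenerateKernel_torusSqDist.tendstoInDistribution_pairs h_var n) f
end

section
/- Fix n ≥ 2, a constant k > 0, a continuous non-increasing function p : [0,∞) → [0,1], and a probability density π on [0,1]; set μ_T = ∫₀¹∫₀¹ min(|x−y|,1−|x−y|)² π(x)π(y) dx dy. For each d, let X₁, …, X_n be i.i.d. points in [0,1]^d whose d coordinates are i.i.d. with density π, let r₀(d) = √(k d) + o(√d), and let G_d be the soft random geometric graph in which each edge (i,j) is included independently with probability p(ρ_T(X_i,X_j)/r₀(d)) given the positions, where ρ_T is the d-dimensional torus distance. Then for every labelled graph g on n vertices with edge-indicator values x_{ij}, P(G_d = g) → Π_{i<j} p_k^{x_{ij}} (1−p_k)^{1−x_{ij}}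 as d → ∞, where p_k = p(√(μ_T/k)); i.e. the soft ensemble converges in distribution to the Erdős–Rényi ensemble G(n, p_k). -/
open MeasureTheory ProbabilityTheory Filter Topology Asymptotics

/-- The distance on the one-dimensional unit torus. -/
noncomputable def rhoT (x y : ℝ) : ℝ := min |x - y| (1 - |x - y|)

/-- The distance on the `d`-dimensional unit torus. -/
noncomputable def torusDist (d : ℕ) (x y : Fin d → ℝ) : ℝ :=
  Real.sqrt (∑ k : Fin d, (min |x k - y k| (1 - |x k - y k|)) ^ 2)

/-- The measure on `[0,1]` with density `π` with respect to Lebesgue measure. -/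
noncomputable def densityMeasure (π : ℝ → ℝ) : Measure ℝ :=
  (volume.restrict (Set.Icc (0:ℝ) 1)).withDensity fun x => ENNReal.ofReal (π x)

/-- The law of `n` points in `[0,1]^d` whose `n·d` coordinates are i.i.d. with density `π`,
together with an independent i.i.d. family of uniform `[0,1]` variables, one per pair of
nodes, used to decide the soft edges. -/
noncomputable def softLaw (π : ℝ → ℝ) (n d : ℕ) :
    Measure ((Fin n → Fin d → ℝ) × (Pairs n → ℝ)) :=
  (Measure.pi fun _ : Fin n => Measure.pi fun _ : Fin d => densityMeasure π).prod
    (Measure.pi fun _ : Pairs n => unif01)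

/-!
Realise the graphs of all dimensions on one probability space: give each node an infinite sequence
of i.i.d. coordinates, of which `G_d` reads the first `d`, and keep the same uniform variable `U q`
on the pair `q` for every `d`. By the strong law of large numbers the squared torus distance of two
distinct nodes, divided by `d`, tends to `μ_T` almost surely, so the connection probability of every
pair tends to `p_k`. Almost surely `U q ≠ p_k` for all `q`, and then `U q ≤ p(…)` eventually has
the same truth value as `U q ≤ p_k`: the event `G_d = g` eventually coincides with the event that
the Erdős–Rényi graph built from `U` is `g`. Bounded convergence concludes.
-/

section Threshold

lemma eventually_le_iff_le_of_tendsto_of_ne {α β : Type*} [LinearOrder β] [TopologicalSpace β]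
    [OrderTopology β] {l : Filter α} {f : α → β} {c u : β} (hf : Tendsto f l (𝓝 c))
    (hu : u ≠ c) : ∀ᶠ a in l, (u ≤ f a ↔ u ≤ c) := by
  rcases hu.lt_or_gt with huc | hcu
  · filter_upwards [hf.eventually_const_lt huc] with a ha
    exact iff_of_true ha.le huc.le
  · filter_upwards [hf.eventually_lt_const hcu] with a ha
    exact iff_of_false ha.not_ge hcu.not_ge

variable {Ω ι : Type*} [MeasurableSpace Ω]

lemma measurableSet_forall_le_iff [Countable ι] {c : ι → Ω → ℝ} (hc : ∀ q, Measurable (c q))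
    (A : ι → Prop) :
    MeasurableSet {ω : Ω × (ι → ℝ) | ∀ q, (ω.2 q ≤ c q ω.1 ↔ A q)} := by
  have hle (q : ι) : MeasurableSet {ω : Ω × (ι → ℝ) | ω.2 q ≤ c q ω.1} :=
    measurableSet_le (by fun_prop) (by fun_prop)
  exact measurableSet_setOfPred.2 <| .forall fun q =>
    (measurableSet_setOfPred.1 (hle q)).iff measurable_const

lemma tendsto_measure_forall_le_iff [Fintype ι] {α : Type*} {l : Filter α}
    [l.IsCountablyGenerated] (μ : Measure Ω) [IsProbabilityMeasure μ] (θ : ι → Measure ℝ)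
    [∀ q, IsFiniteMeasure (θ q)] [∀ q, NullSingletonClass (θ q)] {c : α → ι → Ω → ℝ}
    (hc : ∀ a q, Measurable (c a q)) {c₀ : ι → ℝ}
    (hlim : ∀ q, ∀ᵐ x ∂μ, Tendsto (fun a => c a q x) l (𝓝 (c₀ q))) (A : ι → Prop) :
    Tendsto (fun a => μ.prod (Measure.pi θ) {ω | ∀ q, (ω.2 q ≤ c a q ω.1 ↔ A q)}) l
      (𝓝 (∏ q, θ q {u | u ≤ c₀ q ↔ A q})) := by
  have hlimit_event : μ.prod (Measure.pi θ) {ω | ∀ q, (ω.2 q ≤ c₀ q ↔ A q)} =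
      ∏ q, θ q {u | u ≤ c₀ q ↔ A q} := by
    have hrect : {ω : Ω × (ι → ℝ) | ∀ q, (ω.2 q ≤ c₀ q ↔ A q)} =
        Set.univ ×ˢ Set.univ.pi fun q => {u | u ≤ c₀ q ↔ A q} := by
      ext ω
      simp
    rw [hrect, Measure.prod_prod, measure_univ, one_mul, Measure.pi_pi]
  rw [← hlimit_event]
  refine tendsto_measure_of_ae_tendsto_indicator_of_isFiniteMeasure l
    (measurableSet_forall_le_iff (fun _ => measurable_const) A)
    (fun a => measurableSet_forall_le_iff (hc a) A) ?_
  have hlim' : ∀ᵐ ω ∂μ.prod (Measure.pi θ), ∀ q,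
      Tendsto (fun a => c a q ω.1) l (𝓝 (c₀ q)) :=
    Measure.quasiMeasurePreserving_fst.ae (ae_all_iff.2 hlim)
  have hne : ∀ᵐ ω ∂μ.prod (Measure.pi θ), ∀ q, ω.2 q ≠ c₀ q :=
    Measure.quasiMeasurePreserving_snd.ae
      (ae_all_iff.2 fun q => Measure.ae_eval_ne θ q (c₀ q))
  filter_upwards [hlim', hne] with ω hω hωne
  filter_upwards [eventually_all.2 fun q =>
    eventually_le_iff_le_of_tendsto_of_ne (hω q) (hωne q)] with a ha
  exact forall_congr' fun q => by rw [ha q]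

end Threshold

section Uniform

instance : IsProbabilityMeasure unif01 := ⟨by simp [unif01]⟩

instance : NullSingletonClass unif01 := by
  unfold unif01
  infer_instance

lemma unif01_Iic {c : ℝ} (hc : c ≤ 1) : unif01 (Set.Iic c) = ENNReal.ofReal c := by
  have hinter : Set.Iic c ∩ Set.Icc 0 1 = Set.Icc 0 c := by
    rw [Set.inter_comm, ← Set.Ici_inter_Iic, Set.inter_assoc, Set.Iic_inter_Iic, inf_of_le_right hc,
      Set.Ici_inter_Iic]
  rw [unif01, Measure.restrict_apply measurableSet_Iic, hinter, Real.volume_Icc, sub_zero]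

lemma unif01_real_setOf_le_iff {c : ℝ} (hc : c ∈ Set.Icc 0 1) (P : Prop) [Decidable P] :
    unif01.real {u | u ≤ c ↔ P} = if P then c else 1 - c := by
  have hIic : unif01.real (Set.Iic c) = c := by
    rw [measureReal_def, unif01_Iic hc.2, ENNReal.toReal_ofReal hc.1]
  split_ifs with hP
  · have hset : {u | u ≤ c ↔ P} = Set.Iic c := by
      ext u
      simp [hP]
    rw [hset, hIic]
  · have hcompl : {u | u ≤ c ↔ P} = (Set.Iic c)ᶜ := by
      ext u
      simp [hP]
    rw [hcompl, probReal_compl_eq_one_sub measurableSet_Iic, hIic]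

end Uniform

section Array

variable {V E : Type*} [MeasurableSpace E]

/-- The law of an infinite i.i.d. array with entries of law `ν`: row `i : V` holds the coordinates
of node `i` in all dimensions at once, so that the first `d` columns are the positions of the nodes
of the `d`-dimensional graph. -/
noncomputable abbrev arrayLaw (V : Type*) (ν : Measure E) [IsProbabilityMeasure ν] :
    Measure (V → ℕ → E) :=
  Measure.infinitePi fun _ => Measure.infinitePi fun _ => ν

variable (ν : Measure E) [IsProbabilityMeasure ν]

lemma measurePreserving_arrayLaw_truncate [Fintype V] (d : ℕ) :
    MeasurePreserving (fun (ω : V → ℕ → E) (i : V) (k : Fin d) => ω i k) (arrayLaw V ν)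
      (Measure.pi fun _ => Measure.pi fun _ => ν) := by
  have hrow : MeasurePreserving (fun (u : ℕ → E) (k : Fin d) => u k)
      (Measure.infinitePi fun _ => ν) (Measure.pi fun _ => ν) :=
    ⟨by fun_prop, by
      rw [Measure.map_infinitePi_infinitePi_of_inj Fin.val_injective, Measure.infinitePi_eq_pi]⟩
  rw [arrayLaw, Measure.infinitePi_eq_pi]
  exact measurePreserving_pi _ _ fun _ => hrow

lemma iIndepFun_arrayLaw :
    iIndepFun (fun (q : V × ℕ) (ω : V → ℕ → E) => ω q.1 q.2) (arrayLaw V ν) :=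
  iIndepFun_uncurry_infinitePi' (X := fun _ _ x => x) (fun _ _ => ν) fun _ _ => measurable_id

variable {i j : V}

lemma measurePreserving_arrayLaw_pair (hij : i ≠ j) (k : ℕ) :
    MeasurePreserving (fun ω : V → ℕ → E => (ω i k, ω j k)) (arrayLaw V ν) (ν.prod ν) := by
  have hrows : MeasurePreserving (fun ω : V → ℕ → E => (ω i, ω j)) (arrayLaw V ν)
      ((Measure.infinitePi fun _ => ν).prod (Measure.infinitePi fun _ => ν)) :=
    ⟨by fun_prop, Measure.infinitePi_map_eval_prod hij⟩
  have hentry := measurePreserving_eval_infinitePi (fun _ : ℕ => ν) k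
  exact (hentry.prod hentry).comp hrows

lemma indepFun_arrayLaw_pair {k l : ℕ} (hkl : k ≠ l) :
    IndepFun (fun ω : V → ℕ → E => (ω i k, ω j k)) (fun ω => (ω i l, ω j l)) (arrayLaw V ν) :=
  (iIndepFun_arrayLaw ν).indepFun_prodMk_prodMk (by fun_prop) (i, k) (j, k) (i, l) (j, l)
    (by simp [hkl]) (by simp [hkl]) (by simp [hkl]) (by simp [hkl])

lemma ae_tendsto_sum_arrayLaw_pair_div (hij : i ≠ j) {h : E × E → ℝ}
    (hh : Integrable h (ν.prod ν)) :
    ∀ᵐ ω ∂arrayLaw V ν, Tendsto (fun d : ℕ => (∑ k : Fin d, h (ω i k, ω j k)) / d) atTop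
      (𝓝 (∫ z, h z ∂ν.prod ν)) := by
  have hmp := measurePreserving_arrayLaw_pair ν hij
  have haem (k : ℕ) :
      AEMeasurable h ((arrayLaw V ν).map fun ω => (ω i k, ω j k)) :=
    (hmp k).map_eq ▸ hh.aemeasurable
  have hmean : ∫ ω, h (ω i 0, ω j 0) ∂arrayLaw V ν = ∫ z, h z ∂ν.prod ν := by
    rw [← (hmp 0).map_eq,
      integral_map (hmp 0).measurable.aemeasurable (haem 0).aestronglyMeasurable]
  have hslln := strong_law_ae_real (μ := arrayLaw V ν) (fun k ω => h (ω i k, ω j k))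
    ((hmp 0).integrable_comp_of_integrable hh)
    (fun k l hkl => (indepFun_arrayLaw_pair ν hkl).comp₀ (hmp k).measurable.aemeasurable
      (hmp l).measurable.aemeasurable (haem k) (haem l))
    (fun k => IdentDistrib.comp_of_aemeasurable ⟨(hmp k).measurable.aemeasurable,
      (hmp 0).measurable.aemeasurable, (hmp k).map_eq.trans (hmp 0).map_eq.symm⟩ (haem k))
  simpa only [hmean, Finset.sum_range] using hslln

end Array

section Scaling

lemma tendsto_div_sqrt_of_sub_sqrt_isLittleO {k : ℝ} {r : ℕ → ℝ}
    (hr : (fun d : ℕ => r d - √(k * d)) =o[atTop] fun d : ℕ => √(d : ℝ)) :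
    Tendsto (fun d : ℕ => r d / √(d : ℝ)) atTop (𝓝 √k) := by
  have hlim := hr.tendsto_div_nhds_zero.add_const √k
  rw [zero_add] at hlim
  refine hlim.congr' ?_
  filter_upwards [eventually_gt_atTop 0] with d hd
  have hsqrt : √(d : ℝ) ≠ 0 := (Real.sqrt_pos.2 (Nat.cast_pos.2 hd)).ne'
  rw [Real.sqrt_mul' k d.cast_nonneg]
  field_simp
  ring

lemma tendsto_sqrt_div_of_tendsto_div {S r : ℕ → ℝ} {m s : ℝ}
    (hS : Tendsto (fun d : ℕ => S d / d) atTop (𝓝 m))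
    (hr : Tendsto (fun d : ℕ => r d / √(d : ℝ)) atTop (𝓝 s)) (hs : s ≠ 0) :
    Tendsto (fun d : ℕ => √(S d) / r d) atTop (𝓝 (√m / s)) := by
  refine (hS.sqrt.div hr hs).congr' ?_
  filter_upwards [eventually_gt_atTop 0] with d hd
  have hsqrt : √(d : ℝ) ≠ 0 := (Real.sqrt_pos.2 (Nat.cast_pos.2 hd)).ne'
  rw [Pi.div_apply, Real.sqrt_div' _ d.cast_nonneg, div_div_div_cancel_right₀ hsqrt]

end Scaling

section Torus

lemma measurable_rhoT : Measurable fun z : ℝ × ℝ => rhoT z.1 z.2 := by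
  unfold rhoT
  fun_prop

lemma measurable_torusDist (d : ℕ) :
    Measurable fun z : (Fin d → ℝ) × (Fin d → ℝ) => torusDist d z.1 z.2 := by
  unfold torusDist
  fun_prop

lemma torusDist_nonneg (d : ℕ) (x y : Fin d → ℝ) : 0 ≤ torusDist d x y := Real.sqrt_nonneg _

lemma measurable_comp_torusDist_div {p : ℝ → ℝ} (hpm : Measurable ((Set.Ici 0).domRestrict p))
    (d : ℕ) {r : ℝ} (hr : 0 ≤ r) {V : Type*} (i j : V) :
    Measurable fun x : V → Fin d → ℝ => p (torusDist d (x i) (x j) / r) := by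
  have hrows : Measurable fun x : V → Fin d → ℝ => (x i, x j) := by fun_prop
  have hdist := ((measurable_torusDist d).comp hrows).div_const r
  exact hpm.comp (hdist.subtype_mk (h := fun _ => div_nonneg (torusDist_nonneg d _ _) hr))

lemma rhoT_mem_Icc {x y : ℝ} (hx : x ∈ Set.Icc 0 1) (hy : y ∈ Set.Icc 0 1) :
    rhoT x y ∈ Set.Icc 0 1 := by
  have hxy : |x - y| ≤ 1 := by simpa using abs_sub_le_of_le_of_le hx.1 hx.2 hy.1 hy.2
  exact ⟨le_min (abs_nonneg _) (sub_nonneg.2 hxy), (min_le_left _ _).trans hxy⟩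

variable {ν : Measure ℝ}

lemma integrable_rhoT_sq [IsFiniteMeasure ν] (hν : ∀ᵐ x ∂ν, x ∈ Set.Icc (0 : ℝ) 1) :
    Integrable (fun z : ℝ × ℝ => rhoT z.1 z.2 ^ 2) (ν.prod ν) := by
  refine .of_bound (measurable_rhoT.pow_const 2).aestronglyMeasurable 1 ?_
  filter_upwards [Measure.quasiMeasurePreserving_fst.ae hν,
    Measure.quasiMeasurePreserving_snd.ae hν] with z hz₁ hz₂
  have hrho := rhoT_mem_Icc hz₁ hz₂
  rw [Real.norm_of_nonneg (sq_nonneg _)]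
  exact pow_le_one₀ hrho.1 hrho.2

lemma ae_tendsto_torusDist_div [IsProbabilityMeasure ν]
    (hν : ∀ᵐ x ∂ν, x ∈ Set.Icc (0 : ℝ) 1) {k : ℝ} (hk : 0 < k) {r : ℕ → ℝ}
    (hr : (fun d : ℕ => r d - √(k * d)) =o[atTop] fun d : ℕ => √(d : ℝ))
    {V : Type*} {i j : V} (hij : i ≠ j) :
    ∀ᵐ ω ∂arrayLaw V ν,
      Tendsto (fun d : ℕ => torusDist d (fun l => ω i l) (fun l => ω j l) / r d) atTop
        (𝓝 √((∫ z, rhoT z.1 z.2 ^ 2 ∂ν.prod ν) / k)) := by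
  filter_upwards [ae_tendsto_sum_arrayLaw_pair_div ν hij (integrable_rhoT_sq hν)] with ω hω
  rw [Real.sqrt_div' _ hk.le]
  exact tendsto_sqrt_div_of_tendsto_div hω (tendsto_div_sqrt_of_sub_sqrt_isLittleO hr)
    (Real.sqrt_pos.2 hk).ne'

end Torus

section Density

variable {π : ℝ → ℝ}

instance : SFinite (densityMeasure π) := by
  unfold densityMeasure
  infer_instance

lemma ae_densityMeasure_mem_Icc (π : ℝ → ℝ) : ∀ᵐ x ∂densityMeasure π, x ∈ Set.Icc (0 : ℝ) 1 :=
  (withDensity_absolutelyContinuous _ _).ae_le (ae_restrict_mem measurableSet_Icc)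

lemma isProbabilityMeasure_densityMeasure (hπ0 : ∀ x ∈ Set.Icc (0 : ℝ) 1, 0 ≤ π x)
    (hπ1 : ∫ x in Set.Icc (0 : ℝ) 1, π x = 1) : IsProbabilityMeasure (densityMeasure π) := by
  have hint : IntegrableOn π (Set.Icc 0 1) :=
    not_imp_comm.1 integral_undef (hπ1.trans_ne one_ne_zero)
  refine ⟨?_⟩
  rw [densityMeasure, withDensity_apply _ MeasurableSet.univ, Measure.restrict_univ,
    ← ofReal_integral_eq_lintegral_ofReal hint (ae_restrict_of_forall_mem measurableSet_Icc hπ0),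
    hπ1, ENNReal.ofReal_one]

lemma integral_densityMeasure (hπm : AEMeasurable π (volume.restrict (Set.Icc 0 1)))
    (hπ0 : ∀ x ∈ Set.Icc (0 : ℝ) 1, 0 ≤ π x) (f : ℝ → ℝ) :
    ∫ x, f x ∂densityMeasure π = ∫ x in Set.Icc (0 : ℝ) 1, π x * f x := by
  rw [densityMeasure, integral_withDensity_eq_integral_toReal_smul₀ hπm.ennreal_ofReal (by simp)]
  refine setIntegral_congr_fun measurableSet_Icc fun x hx => ?_
  rw [ENNReal.toReal_ofReal (hπ0 x hx), smul_eq_mul]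

lemma integral_densityMeasure_prod (hπm : AEMeasurable π (volume.restrict (Set.Icc 0 1)))
    (hπ0 : ∀ x ∈ Set.Icc (0 : ℝ) 1, 0 ≤ π x) {f : ℝ × ℝ → ℝ}
    (hf : Integrable f ((densityMeasure π).prod (densityMeasure π))) :
    ∫ z, f z ∂(densityMeasure π).prod (densityMeasure π) =
      ∫ x in Set.Icc (0 : ℝ) 1, ∫ y in Set.Icc (0 : ℝ) 1, f (x, y) * (π x * π y) := by
  simp only [integral_prod f hf, integral_densityMeasure hπm hπ0, ← integral_const_mul]
  congr! 4
  ring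

end Density

theorem stmt_15_general (n : ℕ) (k : ℝ) (hk : 0 < k) (ν : Measure ℝ) [IsProbabilityMeasure ν]
    (hν : ∀ᵐ x ∂ν, x ∈ Set.Icc (0 : ℝ) 1) (μT : ℝ)
    (hμT : μT = ∫ z, rhoT z.1 z.2 ^ 2 ∂ν.prod ν)
    (p : ℝ → ℝ) (hpm : Measurable ((Set.Ici 0).domRestrict p))
    (hpc : ContinuousWithinAt p (Set.Ici 0) √(μT / k))
    (hp01 : ∀ x : ℝ, 0 ≤ x → p x ∈ Set.Icc (0 : ℝ) 1)
    (r₀ : ℕ → ℝ) (hpos : ∀ d, 0 < r₀ d)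
    (hr₀ : (fun d : ℕ => r₀ d - √(k * d)) =o[atTop] fun d : ℕ => √(d : ℝ))
    (g : SimpleGraph (Fin n)) [DecidableRel g.Adj] :
    Tendsto
      (fun d : ℕ =>
        (((Measure.pi fun _ : Fin n => Measure.pi fun _ : Fin d => ν).prod
          (Measure.pi fun _ : Pairs n => unif01)).real {ω | ∀ q : Pairs n,
            (ω.2 q ≤ p (torusDist d (ω.1 q.1.1) (ω.1 q.1.2) / r₀ d) ↔ g.Adj q.1.1 q.1.2)}))
      atTop
      (𝓝 (∏ q : Pairs n, if g.Adj q.1.1 q.1.2 then p √(μT / k) else 1 - p √(μT / k))) := by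
  have hmeas (d : ℕ) (q : Pairs n) :=
    measurable_comp_torusDist_div hpm d (hpos d).le q.1.1 q.1.2
  have htruncate (d : ℕ) := measurePreserving_arrayLaw_truncate (V := Fin n) ν d
  have hlim (q : Pairs n) : ∀ᵐ ω ∂arrayLaw (Fin n) ν, Tendsto (fun d : ℕ =>
      p (torusDist d (fun l => ω q.1.1 l) (fun l => ω q.1.2 l) / r₀ d)) atTop
      (𝓝 (p √(μT / k))) := by
    filter_upwards [ae_tendsto_torusDist_div hν hk hr₀ q.2.ne] with ω hω
    rw [← hμT] at hω
    exact hpc.tendsto.comp (tendsto_nhdsWithin_iff.2 ⟨hω, .of_forall fun d =>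
      div_nonneg (torusDist_nonneg d _ _) (hpos d).le⟩)
  have hcoupled := tendsto_measure_forall_le_iff (arrayLaw (Fin n) ν)
    (fun _ : Pairs n => unif01) (fun d q => (hmeas d q).comp (htruncate d).measurable) hlim
    (fun q => g.Adj q.1.1 q.1.2)
  have hreal := (ENNReal.tendsto_toReal (ENNReal.prod_ne_top fun _ _ => measure_ne_top _ _)).comp
    hcoupled
  simp only [ENNReal.toReal_prod, ← measureReal_def,
    unif01_real_setOf_le_iff (hp01 _ (Real.sqrt_nonneg (μT / k)))] at hreal
  refine hreal.congr fun d => congrArg ENNReal.toReal ?_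
  exact ((htruncate d).prod (.id _)).measure_preimage
    (measurableSet_forall_le_iff (hmeas d) _).nullMeasurableSet

/-- Soft RGGs on the `d`-dimensional torus with i.i.d. coordinate density `π`, continuous
non-increasing connection function `p`, and connection range `r₀(d) = √(kd) + o(√d)`
converge in distribution to the Erdős–Rényi ensemble `G(n, p_k)`, `p_k = p(√(μ_T/k))`. -/
theorem stmt_15 (n : ℕ) (hn : 2 ≤ n) (k : ℝ) (hk : 0 < k)
    (p : ℝ → ℝ) (hpc : ContinuousOn p (Set.Ici 0))
    (hpa : AntitoneOn p (Set.Ici 0))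
    (hp01 : ∀ x : ℝ, 0 ≤ x → p x ∈ Set.Icc (0:ℝ) 1)
    (π : ℝ → ℝ) (hπm : Measurable π)
    (hπ0 : ∀ x ∈ Set.Icc (0:ℝ) 1, 0 ≤ π x)
    (hπ1 : ∫ x in Set.Icc (0:ℝ) 1, π x = 1)
    (μT : ℝ)
    (hμT : μT = ∫ x in Set.Icc (0:ℝ) 1, ∫ y in Set.Icc (0:ℝ) 1, rhoT x y ^ 2 * (π x * π y))
    (r₀ : ℕ → ℝ) (hpos : ∀ d, 0 < r₀ d)
    (hr₀ : (fun d : ℕ => r₀ d - Real.sqrt (k * d)) =o[atTop] fun d : ℕ => Real.sqrt d)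
    (g : SimpleGraph (Fin n)) [DecidableRel g.Adj] :
    Tendsto
      (fun d : ℕ =>
        (softLaw π n d {ω | ∀ q : Pairs n,
            (ω.2 q ≤ p (torusDist d (ω.1 q.1.1) (ω.1 q.1.2) / r₀ d) ↔
              g.Adj q.1.1 q.1.2)}).toReal)
      atTop
      (𝓝 (∏ q : Pairs n,
        if g.Adj q.1.1 q.1.2 then p (Real.sqrt (μT / k)) else 1 - p (Real.sqrt (μT / k)))) := by
  have := isProbabilityMeasure_densityMeasure hπ0 hπ1
  have hsupp := ae_densityMeasure_mem_Icc π
  exact stmt_15_general n k hk (densityMeasure π) hsupp μT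
    (hμT.trans (integral_densityMeasure_prod hπm.aemeasurable hπ0 (integrable_rhoT_sq hsupp)).symm)
    p hpc.domRestrict.measurable (hpc _ (Real.sqrt_nonneg _)) hp01 r₀ hpos hr₀ g
end

section
/- Let n ≥ 3. Let U₁, …, U_n be i.i.d. centered Gaussian random variables of variance 1/180 and, independently, let (V_{ij})_{1≤i<j≤n} be i.i.d. centered Gaussian random variables of variance 1/36; set Z_{ij} = U_i + U_j + V_{ij}. For t ∈ ℝ, let G_t be the random labelled graph on {1,…,n} with an edge between i and j exactly when Z_{ij} ≤ t, and let H(t) = −Σ_g P(G_t = g) log₂ P(G_t = g) be its Shannon entropy. Then H(t) < n(n−1)/2 for every t ∈ ℝ; that is, the d → ∞ limiting distribution of hard random geometric graphs in the unit cube with uniform nodes never attains the maximum possible entropy, and in particular never equals the Erdős–Rényi ensemble G(n, 1/2). -/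
open MeasureTheory ProbabilityTheory

/-- The joint law of the independent Gaussians `U₁,…,U_n` (variance `1/180`) and
`(V_{ij})_{i<j}` (variance `1/36`). -/
noncomputable def cubeGaussLaw (n : ℕ) : Measure ((Fin n → ℝ) × (Pairs n → ℝ)) :=
  (Measure.pi fun _ : Fin n => gaussianReal 0 (1/180 : NNReal)).prod
    (Measure.pi fun _ : Pairs n => gaussianReal 0 (1/36 : NNReal))

/-- `Z_{ij} = U_i + U_j + V_{ij}`, the limiting normalised squared distances in the cube. -/
noncomputable def Zvar (n : ℕ) (ω : (Fin n → ℝ) × (Pairs n → ℝ)) (q : Pairs n) : ℝ :=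
  ω.1 q.1.1 + ω.1 q.1.2 + ω.2 q

/-- `P(G_t = g)` for the limiting hard RGG in the cube: edge `(i,j)` present iff `Z_{ij} ≤ t`. -/
noncomputable def limProb (n : ℕ) (t : ℝ) (g : SimpleGraph (Fin n)) : ℝ :=
  (cubeGaussLaw n {ω | ∀ q : Pairs n, (Zvar n ω q ≤ t ↔ g.Adj q.1.1 q.1.2)}).toReal

/-- The Shannon entropy (base 2) of the limiting hard RGG ensemble in the cube. -/
noncomputable def limEntropy (n : ℕ) (t : ℝ) : ℝ :=
  -∑ g : SimpleGraph (Fin n), limProb n t g * Real.logb 2 (limProb n t g)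

/-!
On a finite type only the uniform distribution attains the maximal entropy. Under the uniform
distribution on labelled graphs the `±1` signs of two distinct edges are uncorrelated. The signs of
the edges `ab` and `ac` of `G_t`, however, are conditionally i.i.d. given `U_a`, so the expectation
of their product is `E[k(U_a)²]`, where `k(x)` is the mean sign of the event `x + U_b + V_{ab} ≤ t`.
Since `k` is strictly decreasing, it vanishes at one point at most and this expectation is positive.
-/

lemma sum_negMulLog_lt_log_card {α : Type*} [Fintype α] {p : α → ℝ} (hp_nonneg : ∀ a, 0 ≤ p a)
    (hp_sum : ∑ a, p a = 1) (hp_ne : ∃ a, p a ≠ (Fintype.card α : ℝ)⁻¹) :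
    ∑ a, Real.negMulLog (p a) < Real.log (Fintype.card α) := by
  obtain ⟨a₀, ha₀⟩ := hp_ne
  have : Nonempty α := ⟨a₀⟩
  set N : ℝ := (Fintype.card α : ℝ) with hN
  have hN_pos : 0 < N := Nat.cast_pos.2 Fintype.card_pos
  have hmean : ∑ a, N⁻¹ • p a = N⁻¹ := by rw [← Finset.smul_sum, hp_sum, smul_eq_mul, mul_one]
  have hjensen : ∑ a, N⁻¹ • Real.negMulLog (p a) < Real.negMulLog (∑ a, N⁻¹ • p a) :=
    (Real.strictConcaveOn_negMulLog.lt_map_sum_iff_of_pos' (fun _ _ ↦ inv_pos.2 hN_pos)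
      (by simp [← hN, hN_pos.ne']) (fun a _ ↦ hp_nonneg a)).2
      ⟨a₀, Finset.mem_univ a₀, by rwa [hmean]⟩
  rw [hmean, ← Finset.smul_sum, smul_eq_mul, Real.negMulLog, Real.log_inv, neg_mul_neg] at hjensen
  exact lt_of_mul_lt_mul_left hjensen (inv_pos.2 hN_pos).le

lemma neg_sum_mul_logb_lt_logb_card {α : Type*} [Fintype α] {b : ℝ} (hb : 1 < b) {p : α → ℝ}
    (hp_nonneg : ∀ a, 0 ≤ p a) (hp_sum : ∑ a, p a = 1)
    (hp_ne : ∃ a, p a ≠ (Fintype.card α : ℝ)⁻¹) :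
    -∑ a, p a * Real.logb b (p a) < Real.logb b (Fintype.card α) := by
  have hnat : -∑ a, p a * Real.logb b (p a) = (∑ a, Real.negMulLog (p a)) / Real.log b := by
    simp_rw [Finset.sum_div, ← Finset.sum_neg_distrib, Real.negMulLog, Real.logb, mul_div_assoc',
      neg_mul, neg_div]
  rw [hnat, Real.logb]
  exact div_lt_div_of_pos_right (sum_negMulLog_lt_log_card hp_nonneg hp_sum hp_ne)
    (Real.log_pos hb)

lemma card_simpleGraph (V : Type*) [Fintype V] [DecidableEq V] :
    Fintype.card (SimpleGraph V) = 2 ^ (Fintype.card V).choose 2 := by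
  classical
  let edgeSetEquiv : SimpleGraph V ≃ Set {e : Sym2 V // ¬e.IsDiag} :=
    { toFun := fun g ↦ {e | e.1 ∈ g.edgeSet}
      invFun := fun s ↦ .fromEdgeSet (Subtype.val '' s)
      left_inv := fun g ↦ by
        ext a b
        simpa using g.ne_of_adj
      right_inv := fun s ↦ by
        ext e
        simp [e.2] }
  rw [Fintype.card_congr edgeSetEquiv, Fintype.card_set, Sym2.card_subtype_not_diag]

lemma logb_two_card_simpleGraph_fin (n : ℕ) :
    Real.logb 2 (Fintype.card (SimpleGraph (Fin n))) = (n : ℝ) * ((n : ℝ) - 1) / 2 := by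
  rw [card_simpleGraph, Fintype.card_fin, Nat.cast_pow, Nat.cast_ofNat, Real.logb_pow,
    Real.logb_self_eq_one one_lt_two, mul_one, Nat.cast_choose_two]

/-- The sign of a proposition: `1` if it holds and `-1` otherwise. It centres the indicator of a
fair event, so independent fair events have uncorrelated signs. -/
noncomputable def propSign (p : Prop) : ℝ := open Classical in if p then 1 else -1

lemma propSign_of {p : Prop} (hp : p) : propSign p = 1 := if_pos hp

lemma propSign_of_not {p : Prop} (hp : ¬p) : propSign p = -1 := if_neg hp

lemma propSign_not (p : Prop) : propSign (¬p) = -propSign p := by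
  by_cases hp : p <;> simp [propSign, hp]

lemma abs_propSign (p : Prop) : |propSign p| = 1 := by
  by_cases hp : p <;> simp [propSign, hp]

lemma propSign_mono {p q : Prop} (hpq : p → q) : propSign p ≤ propSign q := by
  by_cases hp : p
  · rw [propSign_of hp, propSign_of (hpq hp)]
  · rw [propSign_of_not hp]
    exact (abs_le.1 (abs_propSign q).le).1

lemma measurable_propSign_le {α : Type*} [MeasurableSpace α] {f : α → ℝ} (hf : Measurable f)
    (t : ℝ) : Measurable fun x ↦ propSign (f x ≤ t) := by
  classical
  exact Measurable.ite (measurableSet_le hf measurable_const) measurable_const measurable_const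

-- Toggling the edge `ab` is a bijection on graphs that reverses the sign of each summand.
lemma sum_propSign_adj_mul_propSign_adj_eq_zero {V : Type*} [Fintype V] [DecidableEq V]
    {a b c d : V} (hab : a ≠ b) (hne : s(a, b) ≠ s(c, d)) :
    ∑ g : SimpleGraph V, propSign (g.Adj a b) * propSign (g.Adj c d) = 0 := by
  let toggle : SimpleGraph V ≃ SimpleGraph V :=
    Function.Involutive.toPerm (fun g ↦ symmDiff g (.edge a b))
      fun g ↦ symmDiff_symmDiff_cancel_right _ _
  have toggle_ab (g : SimpleGraph V) : (toggle g).Adj a b ↔ ¬g.Adj a b := by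
    simp [toggle, symmDiff_def, SimpleGraph.adj_edge, hab]
  have toggle_cd (g : SimpleGraph V) : (toggle g).Adj c d ↔ g.Adj c d := by
    simp [toggle, symmDiff_def, SimpleGraph.adj_edge, hne]
  have hsum := toggle.sum_comp fun g ↦ propSign (g.Adj a b) * propSign (g.Adj c d)
  simp only [toggle_ab, toggle_cd, propSign_not, neg_mul, Finset.sum_neg_distrib] at hsum
  exact self_eq_neg.1 hsum.symm

lemma integral_comp_eq_sum_measureReal_preimage {Ω α E : Type*} [MeasurableSpace Ω] [Fintype α]
    [NormedAddCommGroup E] [NormedSpace ℝ E] [CompleteSpace E] {P : Measure Ω} [IsFiniteMeasure P]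
    {X : Ω → α} (hX : ∀ a, MeasurableSet (X ⁻¹' {a})) (f : α → E) :
    ∫ ω, f (X ω) ∂P = ∑ a, P.real (X ⁻¹' {a}) • f a := by
  let _ : MeasurableSpace α := ⊤
  have hX_meas : Measurable X := measurable_to_countable' hX
  rw [← integral_map hX_meas.aemeasurable (AEStronglyMeasurable.of_discrete (f := f)),
    integral_fintype .of_finite]
  simp_rw [map_measureReal_apply hX_meas (measurableSet_singleton _)]

lemma integral_prod_prod_mul_self {𝓧 𝓨 : Type*} [MeasurableSpace 𝓧] [MeasurableSpace 𝓨]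
    {μ : Measure 𝓧} {ν : Measure 𝓨} [SFinite μ] [SFinite ν] {φ : 𝓧 → 𝓨 → ℝ}
    (hφ : Integrable (fun z : 𝓧 × 𝓨 × 𝓨 ↦ φ z.1 z.2.1 * φ z.1 z.2.2) (μ.prod (ν.prod ν))) :
    ∫ z, φ z.1 z.2.1 * φ z.1 z.2.2 ∂(μ.prod (ν.prod ν)) = ∫ x, (∫ y, φ x y ∂ν) ^ 2 ∂μ := by
  rw [integral_prod _ hφ]
  exact integral_congr_ae (.of_forall fun x ↦ by
    simp only [integral_prod_mul (φ x) (φ x), sq])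

lemma isOpenPosMeasure_gaussianReal (m : ℝ) {v : NNReal} (hv : v ≠ 0) :
    (gaussianReal m v).IsOpenPosMeasure :=
  (gaussianReal_absolutelyContinuous' m hv).isOpenPosMeasure

lemma isOpenPosMeasure_conv {M : Type*} [AddMonoid M] [TopologicalSpace M] [ContinuousAdd M]
    [SecondCountableTopology M] [MeasurableSpace M] [BorelSpace M] (μ ν : Measure M) [SFinite ν]
    [μ.IsOpenPosMeasure] [ν.IsOpenPosMeasure] : (μ ∗ ν).IsOpenPosMeasure :=
  continuous_add.isOpenPosMeasure_map fun x ↦ ⟨(x, 0), add_zero x⟩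

lemma integrable_propSign_add_le (ν : Measure ℝ) [IsFiniteMeasure ν] (x t : ℝ) :
    Integrable (fun y ↦ propSign (x + y ≤ t)) ν :=
  .of_bound (measurable_propSign_le (by fun_prop) t).aestronglyMeasurable 1
    (.of_forall fun _ ↦ (abs_propSign _).le)

lemma integrable_propSign_add_le_mul_propSign_add_le (P : Measure (ℝ × ℝ × ℝ)) [IsFiniteMeasure P]
    (t : ℝ) :
    Integrable (fun z ↦ propSign (z.1 + z.2.1 ≤ t) * propSign (z.1 + z.2.2 ≤ t)) P :=
  .of_bound ((measurable_propSign_le (by fun_prop) t).mul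
    (measurable_propSign_le (by fun_prop) t)).aestronglyMeasurable 1
    (.of_forall fun z ↦ by simp [abs_propSign])

lemma strictAnti_integral_propSign_add_le (ν : Measure ℝ) [IsFiniteMeasure ν]
    [ν.IsOpenPosMeasure] (t : ℝ) : StrictAnti fun x ↦ ∫ y, propSign (x + y ≤ t) ∂ν := by
  intro x x' hxx'
  have hint (z : ℝ) := integrable_propSign_add_le ν z t
  have hnonneg (y : ℝ) : 0 ≤ propSign (x + y ≤ t) - propSign (x' + y ≤ t) :=
    sub_nonneg.2 (propSign_mono fun h ↦ by linarith)
  rw [← sub_pos, ← integral_sub (hint x) (hint x'),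
    integral_pos_iff_support_of_nonneg hnonneg ((hint x).sub (hint x'))]
  have hsupport : Set.Ioo (t - x') (t - x) ⊆
      Function.support fun y ↦ propSign (x + y ≤ t) - propSign (x' + y ≤ t) := by
    rintro y ⟨hy', hy⟩
    rw [Function.mem_support, propSign_of (by linarith), propSign_of_not (by linarith)]
    norm_num
  exact (isOpen_Ioo.measure_pos ν (Set.nonempty_Ioo.2 (by linarith))).trans_le
    (measure_mono hsupport)

lemma integral_propSign_add_le_mul_propSign_add_le_pos (μ ν : Measure ℝ) [IsFiniteMeasure μ]
    [NeZero μ] [NullSingletonClass μ] [IsFiniteMeasure ν] [ν.IsOpenPosMeasure] (t : ℝ) :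
    0 < ∫ z, propSign (z.1 + z.2.1 ≤ t) * propSign (z.1 + z.2.2 ≤ t) ∂(μ.prod (ν.prod ν)) := by
  set k : ℝ → ℝ := fun x ↦ ∫ y, propSign (x + y ≤ t) ∂ν
  have hint := integrable_propSign_add_le_mul_propSign_add_le (μ.prod (ν.prod ν)) t
  have hk_sq : Integrable (fun x ↦ k x ^ 2) μ :=
    hint.integral_prod_left.congr (.of_forall fun x ↦ by
      simp only [k, sq, integral_prod_mul (fun y ↦ propSign (x + y ≤ t))
        (fun y ↦ propSign (x + y ≤ t))])
  have hk_ne : ∀ᵐ x ∂μ, k x ≠ 0 := by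
    have hzero : {x | k x = 0}.Subsingleton := fun x hx y hy ↦
      (strictAnti_integral_propSign_add_le ν t).injective (hx.trans hy.symm)
    simpa [ae_iff] using hzero.measure_zero μ
  rw [integral_prod_prod_mul_self (φ := fun x y ↦ propSign (x + y ≤ t)) hint]
  refine (integral_nonneg fun x ↦ sq_nonneg (k x)).lt_of_ne' fun hzero ↦ ?_
  rw [integral_eq_zero_iff_of_nonneg (fun x ↦ sq_nonneg (k x)) hk_sq] at hzero
  obtain ⟨x, hx_zero, hx_ne⟩ := (hzero.and hk_ne).exists
  exact hx_ne (pow_eq_zero_iff two_ne_zero |>.1 hx_zero)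

lemma indepFun_prodMk_add_add {Ω ι M : Type*} [MeasurableSpace Ω] {P : Measure Ω} [Add M]
    [MeasurableSpace M] [MeasurableAdd₂ M] {X : ι → Ω → M} (hX : iIndepFun X P)
    (hX_meas : ∀ i, Measurable (X i)) {i j k l m : ι} (hij : i ≠ j) (hik : i ≠ k) (hil : i ≠ l)
    (him : i ≠ m) : IndepFun (X i) (fun ω ↦ (X j ω + X k ω, X l ω + X m ω)) P := by
  classical
  have hdisj : Disjoint ({i} : Finset ι) {j, k, l, m} := by simp [hij, hik, hil, him]
  exact (hX.indepFun_finset {i} {j, k, l, m} hdisj hX_meas).comp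
    (φ := fun x : ({i} : Finset ι) → M ↦ x ⟨i, by simp⟩)
    (ψ := fun x : ({j, k, l, m} : Finset ι) → M ↦ (x ⟨j, by simp⟩ + x ⟨k, by simp⟩,
      x ⟨l, by simp⟩ + x ⟨m, by simp⟩))
    (by fun_prop) (by fun_prop)

section ProductLaw

variable {ι κ α : Type*} [Fintype ι] [Fintype κ] [MeasurableSpace α]

section Heterogeneous

variable (μ : ι → Measure α) (ν : κ → Measure α) [∀ i, IsProbabilityMeasure (μ i)]
  [∀ j, IsProbabilityMeasure (ν j)]

lemma hasLaw_fst_eval (i : ι) :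
    HasLaw (fun ω ↦ ω.1 i) (μ i) ((Measure.pi μ).prod (Measure.pi ν)) :=
  ((measurePreserving_eval μ i).comp measurePreserving_fst).hasLaw

lemma hasLaw_snd_eval (j : κ) :
    HasLaw (fun ω ↦ ω.2 j) (ν j) ((Measure.pi μ).prod (Measure.pi ν)) :=
  ((measurePreserving_eval ν j).comp measurePreserving_snd).hasLaw

lemma iIndepFun_sumElim :
    iIndepFun (fun k (ω : (ι → α) × (κ → α)) ↦ Sum.elim ω.1 ω.2 k)
      ((Measure.pi μ).prod (Measure.pi ν)) := by
  have hprob : ∀ k, IsProbabilityMeasure (Sum.elim μ ν k) := by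
    rintro (i | j) <;> simp only [Sum.elim_inl, Sum.elim_inr] <;> infer_instance
  have hlaw : ∀ k, HasLaw (fun ω : (ι → α) × (κ → α) ↦ Sum.elim ω.1 ω.2 k) (Sum.elim μ ν k)
      ((Measure.pi μ).prod (Measure.pi ν)) := by
    rintro (i | j)
    · exact hasLaw_fst_eval μ ν i
    · exact hasLaw_snd_eval μ ν j
  rw [iIndepFun_iff_hasLaw_pi_pi hlaw]
  convert! (measurePreserving_sumPiEquivProdPi_symm (Sum.elim μ ν)).hasLaw using 3

end Heterogeneous

lemma hasLaw_prodMk_add_add [AddMonoid α] [MeasurableAdd₂ α] (μ ν : Measure α)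
    [IsProbabilityMeasure μ] [IsProbabilityMeasure ν] {a b c : ι} {q r : κ} (hab : a ≠ b)
    (hac : a ≠ c) (hbc : b ≠ c) (hqr : q ≠ r) :
    HasLaw (fun ω ↦ (ω.1 a, ω.1 b + ω.2 q, ω.1 c + ω.2 r)) (μ.prod ((μ ∗ ν).prod (μ ∗ ν)))
      ((Measure.pi fun _ : ι ↦ μ).prod (Measure.pi fun _ : κ ↦ ν)) := by
  set P := (Measure.pi fun _ : ι ↦ μ).prod (Measure.pi fun _ : κ ↦ ν)
  have hindep : iIndepFun (fun k (ω : (ι → α) × (κ → α)) ↦ Sum.elim ω.1 ω.2 k) P :=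
    iIndepFun_sumElim _ _
  have hmeas : ∀ k, Measurable fun ω : (ι → α) × (κ → α) ↦ Sum.elim ω.1 ω.2 k := by
    rintro (i | j) <;> simp only [Sum.elim_inl, Sum.elim_inr] <;> fun_prop
  have hsum (i : ι) (j : κ) : HasLaw (fun ω ↦ ω.1 i + ω.2 j) (μ ∗ ν) P :=
    (hindep.indepFun (i := .inl i) (j := .inr j) Sum.inl_ne_inr).hasLaw_fun_add
      (hasLaw_fst_eval (fun _ ↦ μ) (fun _ ↦ ν) i) (hasLaw_snd_eval (fun _ ↦ μ) (fun _ ↦ ν) j)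
  have hsums : IndepFun (fun ω ↦ ω.1 b + ω.2 q) (fun ω ↦ ω.1 c + ω.2 r) P :=
    hindep.indepFun_add_add hmeas (.inl b) (.inr q) (.inl c) (.inr r)
      (Sum.inl_injective.ne hbc) Sum.inl_ne_inr Sum.inr_ne_inl (Sum.inr_injective.ne hqr)
  have hfst : IndepFun (fun ω ↦ ω.1 a) (fun ω ↦ (ω.1 b + ω.2 q, ω.1 c + ω.2 r)) P :=
    indepFun_prodMk_add_add hindep hmeas (Sum.inl_injective.ne hab) Sum.inl_ne_inr
      (Sum.inl_injective.ne hac) Sum.inl_ne_inr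
  exact hfst.hasLaw_prod (hasLaw_fst_eval (fun _ ↦ μ) (fun _ ↦ ν) a)
    (hsums.hasLaw_prod (hsum b q) (hsum c r))

lemma integral_propSign_mul_propSign_pos_of_common_node (μ ν : Measure ℝ)
    [IsProbabilityMeasure μ] [IsProbabilityMeasure ν] [NullSingletonClass μ] [μ.IsOpenPosMeasure]
    [ν.IsOpenPosMeasure] {a b c : ι} {q r : κ} (hab : a ≠ b) (hac : a ≠ c) (hbc : b ≠ c)
    (hqr : q ≠ r) (t : ℝ) :
    0 < ∫ ω : (ι → ℝ) × (κ → ℝ),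
      propSign (ω.1 a + ω.1 b + ω.2 q ≤ t) * propSign (ω.1 a + ω.1 c + ω.2 r ≤ t)
        ∂((Measure.pi fun _ ↦ μ).prod (Measure.pi fun _ ↦ ν)) := by
  have := isOpenPosMeasure_conv μ ν
  have hpos := integral_propSign_add_le_mul_propSign_add_le_pos μ (μ ∗ ν) t
  rw [← (hasLaw_prodMk_add_add μ ν hab hac hbc hqr).integral_comp
    (integrable_propSign_add_le_mul_propSign_add_le _ t).aestronglyMeasurable] at hpos
  simpa only [Function.comp_def, ← add_assoc] using hpos

end ProductLaw

section LimitGraph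

variable {n : ℕ}

/-- The graph `G_t` of the realisation `z` of the normalised distances: `{i, j}` with `i < j` is an
edge exactly when `z (i, j) ≤ t`. -/
def thresholdGraph (t : ℝ) (z : Pairs n → ℝ) : SimpleGraph (Fin n) :=
  .fromRel fun i j ↦ ∃ h : i < j, z ⟨(i, j), h⟩ ≤ t

lemma thresholdGraph_adj (t : ℝ) (z : Pairs n → ℝ) (q : Pairs n) :
    (thresholdGraph t z).Adj q.1.1 q.1.2 ↔ z q ≤ t := by
  simp [thresholdGraph, q.2, q.2.ne, q.2.not_gt]

lemma simpleGraph_ext_pairs {g g' : SimpleGraph (Fin n)}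
    (h : ∀ q : Pairs n, g.Adj q.1.1 q.1.2 ↔ g'.Adj q.1.1 q.1.2) : g = g' := by
  ext i j
  rcases lt_trichotomy i j with hij | rfl | hji
  · exact h ⟨(i, j), hij⟩
  · simp
  · rw [g.adj_comm, g'.adj_comm]
    exact h ⟨(j, i), hji⟩

lemma thresholdGraph_eq_iff {t : ℝ} {z : Pairs n → ℝ} {g : SimpleGraph (Fin n)} :
    thresholdGraph t z = g ↔ ∀ q : Pairs n, (z q ≤ t ↔ g.Adj q.1.1 q.1.2) := by
  simp_rw [← thresholdGraph_adj t z]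
  exact ⟨fun h q ↦ by rw [h], simpleGraph_ext_pairs⟩

lemma measurableSet_preimage_thresholdGraph (t : ℝ) (g : SimpleGraph (Fin n)) :
    MeasurableSet ((fun ω ↦ thresholdGraph t (Zvar n ω)) ⁻¹' {g}) := by
  have hZ (q : Pairs n) : Measurable fun ω ↦ Zvar n ω q := by
    unfold Zvar
    fun_prop
  simp only [Set.preimage, Set.mem_singleton_iff, thresholdGraph_eq_iff]
  exact measurableSet_setOfPred.2 <| .forall fun q ↦
    (measurableSet_setOfPred.1 (measurableSet_le (hZ q) measurable_const)).iff measurable_const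

instance isProbabilityMeasure_cubeGaussLaw : IsProbabilityMeasure (cubeGaussLaw n) := by
  unfold cubeGaussLaw
  infer_instance

lemma limProb_eq_measureReal_preimage (t : ℝ) (g : SimpleGraph (Fin n)) :
    limProb n t g = (cubeGaussLaw n).real ((fun ω ↦ thresholdGraph t (Zvar n ω)) ⁻¹' {g}) := by
  simp only [limProb, measureReal_def, Set.preimage, Set.mem_singleton_iff, thresholdGraph_eq_iff]

lemma integral_thresholdGraph_eq_sum_limProb (t : ℝ) (f : SimpleGraph (Fin n) → ℝ) :
    ∫ ω, f (thresholdGraph t (Zvar n ω)) ∂(cubeGaussLaw n) = ∑ g, limProb n t g * f g := by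
  simp_rw [limProb_eq_measureReal_preimage]
  exact integral_comp_eq_sum_measureReal_preimage (measurableSet_preimage_thresholdGraph t) f

lemma sum_limProb (n : ℕ) (t : ℝ) : ∑ g, limProb n t g = 1 := by
  simpa using (integral_thresholdGraph_eq_sum_limProb (n := n) t fun _ ↦ 1).symm

lemma sum_limProb_mul_propSign_adj_pos (t : ℝ) {a b c : Fin n} (hab : a < b) (hac : a < c)
    (hbc : b ≠ c) :
    0 < ∑ g, limProb n t g * (propSign (g.Adj a b) * propSign (g.Adj a c)) := by
  have hU : (1 / 180 : NNReal) ≠ 0 := by positivity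
  have hV : (1 / 36 : NNReal) ≠ 0 := by positivity
  have := isOpenPosMeasure_gaussianReal 0 hU
  have := isOpenPosMeasure_gaussianReal 0 hV
  have := nullSingletonClass_gaussianReal (μ := 0) hU
  let q : Pairs n := ⟨(a, b), hab⟩
  let r : Pairs n := ⟨(a, c), hac⟩
  have hqr : q ≠ r := by simpa [q, r] using hbc
  rw [← integral_thresholdGraph_eq_sum_limProb t
    fun g ↦ propSign (g.Adj a b) * propSign (g.Adj a c)]
  have hadj_ab (z : Pairs n → ℝ) := thresholdGraph_adj t z q
  have hadj_ac (z : Pairs n → ℝ) := thresholdGraph_adj t z r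
  simp only [q, r] at hadj_ab hadj_ac
  simp_rw [hadj_ab, hadj_ac]
  exact integral_propSign_mul_propSign_pos_of_common_node _ _ hab.ne hac.ne hbc hqr t

lemma exists_limProb_ne_inv_card (hn : 3 ≤ n) (t : ℝ) :
    ∃ g, limProb n t g ≠ (Fintype.card (SimpleGraph (Fin n)) : ℝ)⁻¹ := by
  by_contra! huniform
  let a : Fin n := ⟨0, by lia⟩
  let b : Fin n := ⟨1, by lia⟩
  let c : Fin n := ⟨2, by lia⟩
  have hab : a < b := by simp [a, b]
  have hac : a < c := by simp [a, c]
  have hbc : b ≠ c := by simp [b, c]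
  have hpos := sum_limProb_mul_propSign_adj_pos t hab hac hbc
  simp_rw [huniform, ← Finset.mul_sum] at hpos
  rw [sum_propSign_adj_mul_propSign_adj_eq_zero hab.ne (by simp [hbc, hac.ne]), mul_zero] at hpos
  exact hpos.false

end LimitGraph

/-- For `n ≥ 3`, the `d → ∞` limiting hard RGG ensemble in the unit cube with uniform nodes
has entropy strictly below the maximum `n(n−1)/2` for every normalised connection range `t`;
in particular it never equals the Erdős–Rényi ensemble `G(n, 1/2)`. -/
theorem stmt_18 (n : ℕ) (hn : 3 ≤ n) (t : ℝ) :
    limEntropy n t < (n : ℝ) * ((n : ℝ) - 1) / 2 := by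
  rw [← logb_two_card_simpleGraph_fin]
  exact neg_sum_mul_logb_lt_logb_card one_lt_two (fun _ ↦ ENNReal.toReal_nonneg)
    (sum_limProb n t) (exists_limProb_ne_inv_card hn t)
end
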